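/- arXiv:1912.03898 — 6 statements merged into one kernel-verified Lean document; each statement's English description precedes it below -/
import Mathlib

section
/- Let X_1,…,X_m be rank-preserving isotone maps from Δ_m(n) to B(n) with associated monomials m(b) = m_1(b)⋯m_m(b). Let c ∈ Δ_m(n+1) have support C ⊆ {1,…,m}. Then the monomial ∏_{i ∈ C} m_i(c − e_i), which has multidegree c − 1_C (where 1_C = Σ_{i∈C} e_i), divides m(c − e_j) for every j ∈ C; in particular the monomials at the vertices of the down-graph D(c) have this monomial as a common factor. -/
/-!
For `i, j ∈ supp c`, the point `c - e_j` is `≥_i` the point `c - e_i`: its `i`-th coordinate is at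
least `c_i - 1`, and its other coordinates are at most those of `c`. Isotonicity of `X_i` therefore
gives `X_i(c - e_i) ⊆ X_i(c - e_j)`, that is, `m_i(c - e_i)` divides `m_i(c - e_j)`, and taking the
product over `i ∈ supp c` gives the divisibility. Since `c - e_i ∈ Δ_m(n)` (`sum_subE`), rank
preservation gives `|X_i(c - e_i)| = c_i - 1`, so `π` sends `m_i(c - e_i)` to `x_i ^ (c_i - 1)`;
the indices outside the support contribute `x_i ^ 0`.
-/

open MvPolynomial

noncomputable section

/-- A list of elements is a regular sequence on `A ⧸ J`. -/
def IsRegSeq {A : Type*} [CommRing A] : List A → Ideal A → Prop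
  | [], _ => True
  | a :: l, J => (∀ f, a * f ∈ J → f ∈ J) ∧ IsRegSeq l (J ⊔ Ideal.span {a})

/-- The list of variable differences `x_{i,j} - x_{i,j+1}` for `1 ≤ i ≤ m`, `1 ≤ j ≤ n-1`,
in `k[X̌_1, …, X̌_m]` with `X̌_i = {x_{i1}, …, x_{in}}`. -/
def diffs (k : Type*) [Field k] (m n : ℕ) : List (MvPolynomial (Fin m × Fin n) k) :=
  (List.finRange m).flatMap fun i =>
    (List.finRange (n - 1)).map fun j =>
      MvPolynomial.X (i, ⟨j.1, by have := j.isLt; omega⟩) -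
        MvPolynomial.X (i, ⟨j.1 + 1, by have := j.isLt; omega⟩)

/-- `b + e_i`. -/
def addE {m : ℕ} (b : Fin m → ℕ) (i : Fin m) : Fin m → ℕ :=
  fun t => b t + if t = i then 1 else 0

/-- `c - e_i` (truncated subtraction). -/
def subE {m : ℕ} (c : Fin m → ℕ) (i : Fin m) : Fin m → ℕ :=
  fun t => c t - if t = i then 1 else 0

/-- The monomial `m(b) = m_1(b) ⋯ m_m(b)` with `m_i(b) = ∏_{j ∈ X_i(b)} x_{ij}`, determined by
the maps `XM i = X_i : Δ_m(n) → B(n)`. -/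
def monB (k : Type*) [Field k] {m n : ℕ} (XM : Fin m → (Fin m → ℕ) → Finset (Fin n))
    (b : Fin m → ℕ) : MvPolynomial (Fin m × Fin n) k :=
  ∏ i : Fin m, ∏ j ∈ XM i b, MvPolynomial.X (i, j)

/-- The ideal `J` generated by the monomials `m(b)`, `b ∈ Δ_m(n)`. -/
def JofX (k : Type*) [Field k] {m n : ℕ} (XM : Fin m → (Fin m → ℕ) → Finset (Fin n)) :
    Ideal (MvPolynomial (Fin m × Fin n) k) :=
  Ideal.span { p | ∃ b : Fin m → ℕ, (∑ t, b t) = n ∧ p = monB k XM b }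

/-- `J ⊆ k[X̌_1, …, X̌_m]` is a polarization of `(x_1, …, x_m)^n`: `J` is a squarefree monomial
ideal, the map `π : x_{ij} ↦ x_i` carries `J` onto `(x_1, …, x_m)^n`, and the variable
differences `x_{i,j} - x_{i,j+1}` form a regular sequence on the quotient by `J`. -/
def IsPolarizationMaxPow (k : Type*) [Field k] {m n : ℕ}
    (J : Ideal (MvPolynomial (Fin m × Fin n) k)) : Prop :=
  (∃ G : Set ((Fin m × Fin n) →₀ ℕ), (∀ d ∈ G, ∀ x, d x ≤ 1) ∧
    J = Ideal.span ((fun d => monomial d (1 : k)) '' G)) ∧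
  Ideal.map (rename Prod.fst : MvPolynomial (Fin m × Fin n) k →ₐ[k] MvPolynomial (Fin m) k) J
    = Ideal.span (Set.range MvPolynomial.X) ^ n ∧
  IsRegSeq (diffs k m n) J

/-- The edge `(c; i, j)` of `Δ_m(n)` (where `c ∈ Δ_m(n+1)` and `i, j ∈ supp c`) is a
linear syzygy edge: `X_p(c - e_i) = X_p(c - e_j)` for every `p ∈ supp(c) \ {i, j}`. -/
def LSedge {m n : ℕ} (XM : Fin m → (Fin m → ℕ) → Finset (Fin n))
    (c : Fin m → ℕ) (i j : Fin m) : Prop :=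
  ∀ p, 1 ≤ c p → p ≠ i → p ≠ j → XM p (subE c i) = XM p (subE c j)

/-- For `i` in the support of `c`, the truncated subtraction in `c - e_i` is exact, so
`c - e_i` lies in `Δ_m(n)`. -/
theorem sum_subE {m n : ℕ} {c : Fin m → ℕ} (hc : (∑ t, c t) = n + 1) {i : Fin m}
    (hi : 1 ≤ c i) : (∑ t, subE c i t) = n := by
  have h : (∑ t, subE c i t) + ∑ t, (if t = i then 1 else 0) = ∑ t, c t := by
    rw [← Finset.sum_add_distrib]
    refine Finset.sum_congr rfl fun t _ => ?_
    unfold subE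
    split_ifs with h
    · subst h; omega
    · omega
  simp only [Finset.sum_ite_eq', Finset.mem_univ, if_true] at h
  omega

/-- Let `c ∈ Δ_m(n+1)` have support `C`.  Then the monomial
`∏_{i ∈ C} m_i(c - e_i)` divides `m(c - e_j)` for every `j ∈ C` (so the monomials at the
vertices of the down-graph `D(c)` have it as a common factor), and it has multidegree
`c - 1_C`, i.e. it is mapped by `π : x_{ij} ↦ x_i` to the monomial with exponent vector
`i ↦ c_i - 1` (truncated subtraction). -/
theorem stmt_6 {k : Type*} [Field k] {m n : ℕ}
    (XM : Fin m → (Fin m → ℕ) → Finset (Fin n))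
    (hrank : ∀ i b, (∑ t, b t) = n → (XM i b).card = b i)
    (hiso : ∀ (i : Fin m) (a b : Fin m → ℕ), (∑ t, a t) = n → (∑ t, b t) = n →
      a i ≤ b i → (∀ j, j ≠ i → b j ≤ a j) → XM i a ⊆ XM i b)
    (c : Fin m → ℕ) (hc : (∑ t, c t) = n + 1) :
    (∀ j, 1 ≤ c j →
      (∏ i ∈ Finset.univ.filter fun i : Fin m => 1 ≤ c i,
        ∏ l ∈ XM i (subE c i), (MvPolynomial.X (i, l) : MvPolynomial (Fin m × Fin n) k))
        ∣ monB k XM (subE c j)) ∧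
    rename Prod.fst
      (∏ i ∈ Finset.univ.filter fun i : Fin m => 1 ≤ c i,
        ∏ l ∈ XM i (subE c i), (MvPolynomial.X (i, l) : MvPolynomial (Fin m × Fin n) k)) =
      monomial (Finsupp.equivFunOnFinite.symm fun i => c i - 1) (1 : k) := by
  constructor
  · intro j hj
    unfold monB
    refine dvd_trans (Finset.prod_dvd_prod_of_dvd _ _ fun i hi => ?_)
      (Finset.prod_dvd_prod_of_subset _ _ _ (Finset.filter_subset _ _))
    have hi' : 1 ≤ c i := (Finset.mem_filter.mp hi).2
    refine Finset.prod_dvd_prod_of_subset _ _ _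
      (hiso i _ _ (sum_subE hc hi') (sum_subE hc hj) ?_ fun t ht => ?_)
    · unfold subE
      split_ifs <;> omega
    · simp [subE, ht]
  · have hfactor : ∀ i ∈ Finset.univ.filter (fun i : Fin m => 1 ≤ c i),
        rename Prod.fst (∏ l ∈ XM i (subE c i),
          (MvPolynomial.X (i, l) : MvPolynomial (Fin m × Fin n) k)) =
        (MvPolynomial.X i : MvPolynomial (Fin m) k) ^ (c i - 1) := by
      intro i hi
      have hi' : 1 ≤ c i := (Finset.mem_filter.mp hi).2
      simp [map_prod, hrank i _ (sum_subE hc hi'), subE]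
    rw [map_prod, Finset.prod_congr rfl hfactor, MvPolynomial.monomial_eq,
      Finsupp.prod_fintype _ _ (fun i => pow_zero _), map_one, one_mul]
    refine Finset.prod_subset (Finset.filter_subset _ _) fun i _ hi => ?_
    -- Outside the support the truncated exponent `c i - 1` is `0`.
    have h0 : c i = 0 := by simpa using hi
    simp [h0]
end
end

section
/- Let X_1,…,X_m be rank-preserving isotone maps from Δ_m(n) to B(n) and let c ∈ Δ_m(n+1). If the linear syzygy edges of the down-graph D(c) contain a spanning tree of D(c), then for every subset R ⊆ supp(c), the R-linear syzygy edges contain a spanning tree of the complete graph D_R(c) on {c − e_r : r ∈ R}; that is, any two vertices c − e_r, c − e_s with r,s ∈ R are joined by a path of R-linear syzygy edges within D_R(c). -/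
/-!
Take a path of linear syzygy edges in `D(c)` from `c - e_r` to `c - e_s` and cut it at its visits
to `R`. On a segment from `u ∈ R` to `v ∈ R` whose interior vertices lie outside `R`, every
`p ∈ R ∖ {u, v}` differs from all vertices of the segment, so `X_p` is constant along it. Hence
`(c; u, v)` is an `R`-linear syzygy edge, and these edges join `c - e_r` to `c - e_s` inside
`D_R(c)`.
-/

open MvPolynomial

noncomputable section

/-- Let `c ∈ Δ_m(n+1)`.  If the linear syzygy edges of the down-graph `D(c)`
contain a spanning tree of `D(c)` (i.e. they connect the vertices `c - e_i`, `i ∈ supp c`),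
then for every subset `R ⊆ supp(c)` the `R`-linear syzygy edges contain a spanning tree of the
complete graph `D_R(c)` on `{c - e_r : r ∈ R}`: any two vertices `c - e_r`, `c - e_s` with
`r, s ∈ R` are joined by a path of `R`-linear syzygy edges within `D_R(c)`. -/
theorem stmt_7 {m n : ℕ}
    (XM : Fin m → (Fin m → ℕ) → Finset (Fin n))
    (hrank : ∀ i b, (∑ t, b t) = n → (XM i b).card = b i)
    (hiso : ∀ (i : Fin m) (a b : Fin m → ℕ), (∑ t, a t) = n → (∑ t, b t) = n →
      a i ≤ b i → (∀ j, j ≠ i → b j ≤ a j) → XM i a ⊆ XM i b)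
    (c : Fin m → ℕ) (hc : (∑ t, c t) = n + 1)
    (hconn : ∀ i j, 1 ≤ c i → 1 ≤ c j →
      Relation.ReflTransGen (fun r s => 1 ≤ c r ∧ 1 ≤ c s ∧ LSedge XM c r s) i j)
    (R : Finset (Fin m)) (hR : ∀ i ∈ R, 1 ≤ c i) :
    ∀ r ∈ R, ∀ s ∈ R,
      Relation.ReflTransGen
        (fun u v => u ∈ R ∧ v ∈ R ∧
          ∀ p ∈ R, p ≠ u → p ≠ v → XM p (subE c u) = XM p (subE c v)) r s := by
  intro r hr s hs
  -- `u` is the last vertex of `R` visited strictly before the current vertex `x`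
  -- (or `r` itself at the start of the path).
  have key : ∀ x, Relation.ReflTransGen
      (fun r s => 1 ≤ c r ∧ 1 ≤ c s ∧ LSedge XM c r s) r x →
      ∃ u ∈ R, Relation.ReflTransGen
        (fun u v => u ∈ R ∧ v ∈ R ∧
          ∀ p ∈ R, p ≠ u → p ≠ v → XM p (subE c u) = XM p (subE c v)) r u ∧
        ∀ p ∈ R, p ≠ u → p ≠ x → XM p (subE c u) = XM p (subE c x) := by
    intro x hx
    induction hx with
    | refl => exact ⟨r, hr, .refl, fun _ _ _ _ => rfl⟩
    | @tail x y _ hxy ih =>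
      obtain ⟨u, hu, hru, hux⟩ := ih
      obtain ⟨-, -, hxy⟩ := hxy
      by_cases hxR : x ∈ R
      · exact ⟨x, hxR, hru.tail ⟨hu, hxR, hux⟩, fun p hp => hxy p (hR p hp)⟩
      · refine ⟨u, hu, hru, fun p hp hpu hpy => ?_⟩
        have hpx : p ≠ x := fun h => hxR (h ▸ hp)
        exact (hux p hp hpu hpx).trans (hxy p (hR p hp) hpx hpy)
  obtain ⟨u, hu, hru, hus⟩ := key s (hconn r s (hR r hr) (hR s hs))
  exact hru.tail ⟨hu, hs, hus⟩
end
end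

section
/- For n ≥ 1, the number of orbits of the action of the symmetric group S_n on the set of rank-preserving isotone maps X : Δ_3(n) → B(n) (with Δ_3(n) ordered by ≥_1) equals 2^{n(n−1)/2}; moreover the orbits are in bijection with the subsets of Δ_3^+(n+1), an isotone map X corresponding to the set of c ∈ Δ_3^+(n+1) for which X(c_1, c_2 − 1, c_3) ≠ X(c_1, c_2, c_3 − 1). -/
/-!
Fix `X` rank-preserving and isotone. Along the side `k = 0` of the triangle of triples `(r, j, k)`,
the sets `X(r, n - r, 0)` form a complete flag, which some permutation carries to the standard
flag `{x | x < r}`. The remaining values are then forced by the set `Q` of quadratic syzygy edges: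
`X(r+1, j, k+1)` and `X(r+1, j+1, k)` both lie between `X(r, j+1, k+1)` and `X(r+2, j, k)`,
whose ranks differ by two, so `X(r+1, j, k+1)` is either equal to `X(r+1, j+1, k)` or the unique
other set `X(r, j+1, k+1) ∪ (X(r+2, j, k) \ X(r+1, j+1, k))` of the interval.
The alternative is decided by whether `(r+1, j+1, k+1)` belongs to `Q`.

Conversely this recursion, started with the standard flag, defines a map `model Q` for every `Q`;
it is rank-preserving and isotone and has `Q` as its set of edges (`model_spec`, `QSset_modelMap`).
Every `X` is a permuted copy of `model (QSset n X)` (`exists_perm_model`), which gives both the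
classification of orbits and, after counting `Δ_3^+(n+1)`, their number.
-/

/-- `Δ_3(n)`: triples of natural numbers summing to `n`. -/
def Del3 (n : ℕ) := {b : ℕ × ℕ × ℕ // b.1 + b.2.1 + b.2.2 = n}

/-- `X : Δ_3(n) → B(n)` is rank-preserving (`|X(b)| = b_1`) and isotone for the order `≥_1`
(`b ≥_1 a` iff `b_1 ≥ a_1`, `b_2 ≤ a_2`, `b_3 ≤ a_3`). -/
def IsRPIso (n : ℕ) (X : Del3 n → Finset (Fin n)) : Prop :=
  (∀ b, (X b).card = b.1.1) ∧
  ∀ a b : Del3 n, a.1.1 ≤ b.1.1 → b.1.2.1 ≤ a.1.2.1 → b.1.2.2 ≤ a.1.2.2 → X a ⊆ X b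

/-- `Δ_3^+(n+1)`: triples of positive natural numbers summing to `n+1`. -/
def Del3plus (n : ℕ) :=
  {c : ℕ × ℕ × ℕ // c.1 + c.2.1 + c.2.2 = n + 1 ∧ 1 ≤ c.1 ∧ 1 ≤ c.2.1 ∧ 1 ≤ c.2.2}

/-- The set of `c ∈ Δ_3^+(n+1)` whose `(c;2,3)`-edge is a quadratic syzygy edge for `X`,
i.e. `X(c_1, c_2 - 1, c_3) ≠ X(c_1, c_2, c_3 - 1)`. -/
def QSset (n : ℕ) (X : Del3 n → Finset (Fin n)) : Set (Del3plus n) :=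
  {c | X ⟨(c.1.1, c.1.2.1 - 1, c.1.2.2), by obtain ⟨h1, h2, h3, h4⟩ := c.2; show c.1.1 + (c.1.2.1 - 1) + c.1.2.2 = n; omega⟩ ≠
       X ⟨(c.1.1, c.1.2.1, c.1.2.2 - 1), by obtain ⟨h1, h2, h3, h4⟩ := c.2; show c.1.1 + c.1.2.1 + (c.1.2.2 - 1) = n; omega⟩}

/-- Two rank-preserving isotone maps lie in the same `S_n`-orbit. -/
def SameOrbit (n : ℕ) (X Y : {X : Del3 n → Finset (Fin n) // IsRPIso n X}) : Prop :=
  ∃ g : Equiv.Perm (Fin n), ∀ b, (X.1 b).map g.toEmbedding = Y.1 b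

open Classical in
/-- The rank-preserving isotone map with quadratic syzygy edges `Q` and the standard flag on the
side `k = 0`, evaluated at the triple `(r, j, k)`. The arguments come in the order `k`, `r`, `j`,
since the recursion is lexicographic in `(k, r)`; the values matter only when `r + j + k = n`. -/
noncomputable def model {n : ℕ} (Q : Set (Del3plus n)) : ℕ → ℕ → ℕ → Finset (Fin n)
  | 0, r, _ => Finset.univ.filter (fun x => x.1 < r)
  | _ + 1, 0, _ => ∅
  | k + 1, r + 1, j =>
    if ∃ h, (⟨(r + 1, j + 1, k + 1), h⟩ : Del3plus n) ∈ Q then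
      model Q (k + 1) r (j + 1) ∪ (model Q k (r + 2) j \ model Q k (r + 1) (j + 1))
    else model Q k (r + 1) (j + 1)

lemma card_filter_lt {n r : ℕ} (h : r ≤ n) :
    (Finset.univ.filter (fun x : Fin n => x.1 < r)).card = r := by
  rw [Fin.card_filter_val_lt]
  omega

/-- Ranks and the two kinds of covering relations, by induction on `k` and then on `r`. -/
lemma model_spec {n : ℕ} (Q : Set (Del3plus n)) (k : ℕ) :
    (∀ r j, r + j + k = n → (model Q k r j).card = r) ∧
    (∀ r j, r + j + 1 + k = n → model Q k r (j + 1) ⊆ model Q k (r + 1) j) ∧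
    (∀ k', k = k' + 1 → ∀ r j, r + j + k = n → model Q k r j ⊆ model Q k' (r + 1) j) := by
  induction k with
  | zero =>
    refine ⟨fun r j h => ?_, fun r j h x hx => ?_, fun k' h => by omega⟩
    · rw [model]; exact card_filter_lt (by omega)
    · simp only [model, Finset.mem_filter, Finset.mem_univ, true_and] at hx ⊢
      omega
  | succ k ih =>
    obtain ⟨ihc, ihs, -⟩ := ih
    have key : ∀ r j, r + j + (k + 1) = n → (model Q (k + 1) r j).card = r ∧
        model Q (k + 1) r j ⊆ model Q k (r + 1) j := by
      intro r
      induction r with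
      | zero => intro j h; simp [model]
      | succ r ihr =>
        intro j h
        obtain ⟨h1, h2⟩ := ihr (j + 1) (by omega)
        have h3 := ihs (r + 1) j (by omega)
        have c1 := ihc (r + 1) (j + 1) (by omega)
        have c2 := ihc (r + 2) j (by omega)
        rw [model]
        split_ifs with hQ
        · refine ⟨?_, Finset.union_subset (h2.trans h3) Finset.sdiff_subset⟩
          rw [Finset.card_union_of_disjoint (Finset.disjoint_sdiff.mono_left h2),
            Finset.card_sdiff_of_subset h3, h1, c1, c2]
          omega
        · exact ⟨c1, h3⟩
    refine ⟨fun r j h => (key r j h).1, fun r j h => ?_, fun k' hk r j h => ?_⟩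
    · conv_rhs => rw [model]
      split_ifs with hQ
      · exact Finset.subset_union_left
      · exact (key r (j + 1) (by omega)).2
    · obtain rfl : k = k' := by omega
      exact (key r j h).2

lemma model_mono_left {n : ℕ} (Q : Set (Del3plus n)) (d k r j : ℕ) (h : r + (j + d) + k = n) :
    model Q k r (j + d) ⊆ model Q k (r + d) j := by
  induction d generalizing j with
  | zero => simp
  | succ d ih =>
    refine subset_trans ?_ ((model_spec Q k).2.1 (r + d) j (by omega))
    have := ih (j + 1) (by omega)
    rwa [show j + (d + 1) = j + 1 + d by omega]

lemma model_mono_right {n : ℕ} (Q : Set (Del3plus n)) (d k r j : ℕ) (h : r + j + (k + d) = n) :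
    model Q (k + d) r j ⊆ model Q k (r + d) j := by
  induction d generalizing k with
  | zero => simp
  | succ d ih =>
    refine subset_trans ?_ ((model_spec Q (k + 1)).2.2 k rfl (r + d) j (by omega))
    have := ih (k + 1) (by omega)
    rwa [show k + (d + 1) = k + 1 + d by omega]

/-- `model Q` as a map on `Δ_3(n)`. -/
noncomputable def modelMap {n : ℕ} (Q : Set (Del3plus n)) (b : Del3 n) : Finset (Fin n) :=
  model Q b.1.2.2 b.1.1 b.1.2.1

lemma isRPIso_modelMap {n : ℕ} (Q : Set (Del3plus n)) : IsRPIso n (modelMap Q) := by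
  refine ⟨fun b => (model_spec Q _).1 _ _ b.2, ?_⟩
  rintro ⟨⟨r, j, k⟩, h⟩ ⟨⟨r', j', k'⟩, h'⟩ h1 h2 h3
  change r + j + k = n at h
  change r' + j' + k' = n at h'
  change j' ≤ j at h2
  change k' ≤ k at h3
  change model Q k r j ⊆ model Q k' r' j'
  obtain ⟨d, rfl⟩ := Nat.exists_eq_add_of_le h2
  obtain ⟨e, rfl⟩ := Nat.exists_eq_add_of_le h3
  obtain rfl : r' = r + d + e := by omega
  exact (model_mono_left Q d _ r j' (by omega)).trans (model_mono_right Q e k' _ j' (by omega))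

lemma QSset_modelMap {n : ℕ} (Q : Set (Del3plus n)) : QSset n (modelMap Q) = Q := by
  ext ⟨⟨r, j, k⟩, hc⟩
  obtain ⟨h1, h2, h3, h4⟩ := id hc
  simp only at h1 h2 h3 h4
  obtain ⟨r, rfl⟩ := Nat.exists_eq_add_of_le' h2
  obtain ⟨j, rfl⟩ := Nat.exists_eq_add_of_le' h3
  obtain ⟨k, rfl⟩ := Nat.exists_eq_add_of_le' h4
  change model Q (k + 1) (r + 1) j ≠ model Q k (r + 1) (j + 1) ↔ _
  rw [model]
  split_ifs with hQ
  · refine ⟨fun _ => hQ.2, fun _ heq => ?_⟩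
    have hsub : model Q k (r + 2) j ⊆ model Q k (r + 1) (j + 1) := by
      intro x hx
      by_contra hx'
      apply hx'
      rw [← heq]
      exact Finset.mem_union_right _ (Finset.mem_sdiff.2 ⟨hx, hx'⟩)
    have := Finset.card_le_card hsub
    rw [(model_spec Q k).1 _ _ (by omega), (model_spec Q k).1 _ _ (by omega)] at this
    omega
  · exact ⟨fun h => absurd rfl h, fun h => absurd ⟨hc, h⟩ hQ⟩

/-- The symmetric group acts transitively on complete flags of subsets. -/
lemma exists_perm_flag {n : ℕ} (F : ℕ → Finset (Fin n)) (hc : ∀ r ≤ n, (F r).card = r)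
    (hm : ∀ r s, r ≤ s → s ≤ n → F r ⊆ F s) :
    ∃ g : Equiv.Perm (Fin n), ∀ r ≤ n,
      (Finset.univ.filter (fun x : Fin n => x.1 < r)).map g.toEmbedding = F r := by
  have hex : ∀ r : Fin n, ∃ x, x ∈ F (r.1 + 1) ∧ x ∉ F r.1 := by
    intro r
    apply Finset.exists_mem_notMem_of_card_lt_card
    rw [hc _ (by omega), hc _ (by omega)]
    omega
  choose x hx hx' using hex
  have hlt : ∀ a b : Fin n, a < b → x a ≠ x b := by
    intro a b hab heq
    apply hx' b
    rw [← heq]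
    exact hm _ _ hab b.2.le (hx a)
  have hinj : Function.Injective x := by
    intro a b hab
    rcases lt_trichotomy a b with h | h | h
    · exact absurd hab (hlt a b h)
    · exact h
    · exact absurd hab.symm (hlt b a h)
  refine ⟨Equiv.ofBijective x (Finite.injective_iff_bijective.1 hinj), fun r hr => ?_⟩
  apply Finset.eq_of_subset_of_card_le
  · intro y hy
    simp only [Finset.mem_map, Finset.mem_filter, Finset.mem_univ, true_and] at hy
    obtain ⟨a, ha, rfl⟩ := hy
    exact hm _ _ ha hr (hx a)
  · rw [Finset.card_map, card_filter_lt hr, hc r hr]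

/-- If `A` and `B` lie strictly between `L` and `U`, whose cardinalities differ by two, and
`A ≠ B`, then `A` is obtained from `L` by adding the element of `U` missing from `B`. -/
lemma diamond {α : Type*} [DecidableEq α] {L A B U : Finset α} {r : ℕ} (hLA : L ⊆ A) (hLB : L ⊆ B)
    (hAU : A ⊆ U) (hBU : B ⊆ U) (cL : L.card = r) (cA : A.card = r + 1) (cB : B.card = r + 1)
    (cU : U.card = r + 2) (hne : A ≠ B) : A = L ∪ (U \ B) := by
  have hAB : A ∩ B = L := by
    symm
    apply Finset.eq_of_subset_of_card_le (Finset.subset_inter hLA hLB)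
    have : (A ∩ B).card < A.card := by
      apply Finset.card_lt_card
      refine ⟨Finset.inter_subset_left, fun h => hne ?_⟩
      exact Finset.eq_of_subset_of_card_le (h.trans Finset.inter_subset_right) (by omega)
    omega
  apply Finset.eq_of_subset_of_card_le
  · intro y hy
    by_cases hB : y ∈ B
    · exact Finset.mem_union_left _ (hAB ▸ Finset.mem_inter.2 ⟨hy, hB⟩)
    · exact Finset.mem_union_right _ (Finset.mem_sdiff.2 ⟨hAU hy, hB⟩)
  · rw [Finset.card_union_of_disjoint (Finset.disjoint_sdiff.mono_left hLB),
      Finset.card_sdiff_of_subset hBU]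
    omega

/-- Every rank-preserving isotone map is a permuted copy of the model with the same edges. -/
lemma exists_perm_model {n : ℕ} {X : Del3 n → Finset (Fin n)} (hX : IsRPIso n X) :
    ∃ g : Equiv.Perm (Fin n), ∀ b, (modelMap (QSset n X) b).map g.toEmbedding = X b := by
  obtain ⟨hc, hm⟩ := hX
  obtain ⟨g, hg⟩ := exists_perm_flag
    (fun r => if h : r ≤ n then X ⟨(r, n - r, 0), by simp only; omega⟩ else ∅)
    (fun r hr => by simp only [hr, dif_pos]; exact hc _)
    (fun r s hrs hs => by
      simp only [hs, hrs.trans hs, dif_pos]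
      exact hm _ _ hrs (by simp only; omega) le_rfl)
  refine ⟨g, ?_⟩
  have key : ∀ k r j (h : r + j + k = n),
      (model (QSset n X) k r j).map g.toEmbedding = X ⟨(r, j, k), h⟩ := by
    intro k
    induction k with
    | zero =>
      intro r j h
      obtain rfl : j = n - r := by omega
      have hr : r ≤ n := by omega
      rw [model, hg r hr]
      simp only [hr, dif_pos]
    | succ k ihk =>
      intro r
      induction r with
      | zero =>
        intro j h
        rw [model, Finset.map_empty]
        exact (Finset.card_eq_zero.1 (hc _)).symm
      | succ r ihr =>
        intro j h
        have hmem : (∃ h, (⟨(r + 1, j + 1, k + 1), h⟩ : Del3plus n) ∈ QSset n X) ↔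
            X ⟨(r + 1, j, k + 1), h⟩ ≠ X ⟨(r + 1, j + 1, k), by simp only; omega⟩ :=
          ⟨fun h => h.2, fun hne => ⟨by simp only; omega, hne⟩⟩
        rw [model]
        split_ifs with hQ
        · rw [Finset.map_union, Finset.map_sdiff, ihr (j + 1) (by omega),
            ihk (r + 2) j (by omega), ihk (r + 1) (j + 1) (by omega)]
          symm
          apply diamond (r := r) _ _ _ _ (hc _) (hc _) (hc _) (hc _) (hmem.1 hQ)
          all_goals apply hm <;> simp only <;> omega
        · rw [ihk (r + 1) (j + 1) (by omega)]
          exact (not_not.1 (fun hne => hQ (hmem.2 hne))).symm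
  exact fun b => key _ _ _ b.2

/-- A triple `c` is encoded by `s = c_1 + c_2 - 1 < n` and `c_1 - 1 < s`. -/
def del3plusEquiv (n : ℕ) : Del3plus n ≃ (Σ s : Fin n, Fin s.1) where
  toFun c := ⟨⟨c.1.1 + c.1.2.1 - 1, by have := c.2; omega⟩,
    ⟨c.1.1 - 1, by have := c.2; simp only; omega⟩⟩
  invFun p := ⟨(p.2.1 + 1, p.1.1 - p.2.1, n - p.1.1), by
    have := p.1.2; have := p.2.2; simp only; omega⟩
  left_inv := by
    rintro ⟨⟨a, b, c⟩, h⟩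
    change a + b + c = n + 1 ∧ 1 ≤ a ∧ 1 ≤ b ∧ 1 ≤ c at h
    apply Subtype.ext
    change (a - 1 + 1, a + b - 1 - (a - 1), n - (a + b - 1)) = (a, b, c)
    simp only [Prod.mk.injEq]
    omega
  right_inv := by
    rintro ⟨⟨s, hs⟩, ⟨t, ht⟩⟩
    simp only at ht
    have e : t + 1 + (s - t) - 1 = s := by omega
    simp only [Nat.add_sub_cancel, Sigma.mk.injEq, Fin.mk.injEq]
    refine ⟨e, ?_⟩
    congr 1
    exact proof_irrel_heq _ _

lemma card_del3plus (n : ℕ) : Nat.card (Del3plus n) = n * (n - 1) / 2 := by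
  rw [Nat.card_congr (del3plusEquiv n), Nat.card_eq_fintype_card, Fintype.card_sigma]
  simp only [Fintype.card_fin]
  rw [Fin.sum_univ_eq_sum_range (fun i => i) n, Finset.sum_range_id]

/-- For `n ≥ 1` the orbits of the `S_n`-action on the set of rank-preserving
isotone maps `X : Δ_3(n) → B(n)` are in bijection with the subsets of `Δ_3^+(n+1)`, an isotone
map `X` corresponding to its set of quadratic syzygy edges `QSset n X`: two maps have the same
`QSset` iff they lie in the same orbit, every subset of `Δ_3^+(n+1)` arises, and consequently
the number of orbits equals `2^(n(n-1)/2)`. -/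
theorem stmt_9 (n : ℕ) (hn : 1 ≤ n) :
    (∀ X Y : {X : Del3 n → Finset (Fin n) // IsRPIso n X},
      (QSset n X.1 = QSset n Y.1 ↔ SameOrbit n X Y)) ∧
    Function.Surjective
      (fun X : {X : Del3 n → Finset (Fin n) // IsRPIso n X} => QSset n X.1) ∧
    Nat.card (Quot (SameOrbit n)) = 2 ^ (n * (n - 1) / 2) := by
  have hiff : ∀ X Y : {X : Del3 n → Finset (Fin n) // IsRPIso n X},
      (QSset n X.1 = QSset n Y.1 ↔ SameOrbit n X Y) := by
    rintro ⟨X, hX⟩ ⟨Y, hY⟩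
    constructor
    · intro h
      simp only at h
      obtain ⟨g, hg⟩ := exists_perm_model hX
      obtain ⟨g', hg'⟩ := exists_perm_model hY
      refine ⟨g.symm.trans g', fun b => ?_⟩
      simp only
      rw [← hg, ← hg', h, Finset.map_map]
      congr 1
      ext x
      simp
    · rintro ⟨g, hg⟩
      ext c
      change X _ ≠ X _ ↔ Y _ ≠ Y _
      rw [← (Finset.map_injective g.toEmbedding).ne_iff]
      exact iff_of_eq (congrArg₂ (· ≠ ·) (hg _) (hg _))
  have hsurj : Function.Surjective
      (fun X : {X : Del3 n → Finset (Fin n) // IsRPIso n X} => QSset n X.1) :=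
    fun Q => ⟨⟨modelMap Q, isRPIso_modelMap Q⟩, QSset_modelMap Q⟩
  refine ⟨hiff, hsurj, ?_⟩
  have hbij : Function.Bijective
      (Quot.lift (fun X : {X : Del3 n → Finset (Fin n) // IsRPIso n X} => QSset n X.1)
        (fun X Y h => (hiff X Y).2 h) : Quot (SameOrbit n) → Set (Del3plus n)) := by
    constructor
    · rintro ⟨X⟩ ⟨Y⟩ h
      exact Quot.sound ((hiff X Y).1 h)
    · intro Q
      obtain ⟨X, hX⟩ := hsurj Q
      exact ⟨Quot.mk _ X, hX⟩
  have : Finite (Del3plus n) := Finite.of_equiv _ (del3plusEquiv n).symm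
  have := Fintype.ofFinite (Del3plus n)
  rw [Nat.card_eq_of_bijective _ hbij, Nat.card_eq_fintype_card, Fintype.card_set,
    ← Nat.card_eq_fintype_card, card_del3plus]
end

section
/- Suppose one has isotone maps {χ_j}_{j ∈ S} for Δ_S(n,d) such that in every down-graph of Δ_S(n,d) the linear syzygy edges contain a spanning tree. Let Δ_R(n,d′) be a nonempty subgraph of Δ_S(n,d) (so R ⊆ S, d′ ≥ d componentwise, and d′_i = d_i for i ∉ S), and for j ∈ R let χ̄_j be the restriction of χ_j to Δ_R(n, d′ + e_j). Then every down-graph of Δ_R(n,d′) contains a spanning tree of linear syzygy edges for the restricted maps {χ̄_j}_{j ∈ R}. -/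
/-- `b ∈ Δ_S(N, d)`: `Σ b_i = N`, `b ≥ d` componentwise, and `supp(b - d) ⊆ S`. -/
def memDel {m : ℕ} (S : Finset (Fin m)) (d : Fin m → ℕ) (N : ℕ) (b : Fin m → ℕ) : Prop :=
  (∑ i, b i) = N ∧ (∀ i, d i ≤ b i) ∧ (∀ i, d i < b i → i ∈ S)

/-- Call `u, v ∈ V` adjacent over the vertex set `V` if `f p u = f p v` for all `p ∈ V` other than
`u, v`. A path over `V` between vertices of `W ⊆ V` can be shortcut to a path over `W`. -/
theorem reflTransGen_shortcut {α β : Type*} (f : α → α → β) (V W : α → Prop)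
    (hWV : ∀ p, W p → V p) {r s : α} (hr : W r) (hs : W s)
    (h : Relation.ReflTransGen
      (fun u v => V u ∧ V v ∧ ∀ p, V p → p ≠ u → p ≠ v → f p u = f p v) r s) :
    Relation.ReflTransGen
      (fun u v => W u ∧ W v ∧ ∀ p, W p → p ≠ u → p ≠ v → f p u = f p v) r s := by
  -- `y` is the last vertex of `W` met by the path up to its current endpoint.
  have key : ∃ y, W y ∧ (W s → y = s) ∧
      Relation.ReflTransGen
        (fun u v => W u ∧ W v ∧ ∀ p, W p → p ≠ u → p ≠ v → f p u = f p v) r y ∧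
      ∀ p, W p → p ≠ y → p ≠ s → f p y = f p s := by
    clear hs
    induction h with
    | refl => exact ⟨r, hr, fun _ => rfl, .refl, fun _ _ _ _ => rfl⟩
    | @tail x z _ hxz ih =>
      obtain ⟨y, hy, hyx, hpath, hf⟩ := ih
      have hyz : ∀ p, W p → p ≠ y → p ≠ z → f p y = f p z := by
        intro p hp hpy hpz
        -- If `p = x`, then `x ∈ W`, hence `y = x = p`.
        have hpx : p ≠ x := by
          rintro rfl
          exact hpy (hyx hp).symm
        exact (hf p hp hpy hpx).trans (hxz.2.2 p (hWV p hp) hpx hpz)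
      by_cases hz : W z
      · exact ⟨z, hz, fun _ => rfl, hpath.tail ⟨hy, hz, hyz⟩, fun _ _ _ _ => rfl⟩
      · exact ⟨y, hy, fun h => absurd h hz, hpath, hyz⟩
  obtain ⟨y, -, hys, hpath, -⟩ := key
  exact hys hs ▸ hpath

/-- Suppose the maps `χ_j` (`j ∈ S`, each isotone for `≥_j` on
`Δ_S(n, d + e_j)`, with values in `{0 < 1}` modelled as `Bool`) are such that in every
down-graph of `Δ_S(n,d)` the linear syzygy edges contain a spanning tree (i.e. connect the
vertices `c - e_r`, `r ∈ supp(c - d)`).  Let `Δ_R(n, d')` be a nonempty subgraph of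
`Δ_S(n, d)` (so `R ⊆ S`, `d' ≥ d` componentwise, and `d'_i = d_i` for `i ∉ S`).  Then every
down-graph of `Δ_R(n, d')` contains a spanning tree of linear syzygy edges for the restricted
maps `{χ_j}_{j ∈ R}`. -/
theorem stmt_16 {m n : ℕ} (S : Finset (Fin m)) (d : Fin m → ℕ)
    (χ : Fin m → (Fin m → ℕ) → Bool)
    (hiso : ∀ j ∈ S, ∀ a b : Fin m → ℕ,
      memDel S (addE d j) n a → memDel S (addE d j) n b →
      a j ≤ b j → (∀ i, i ≠ j → b i ≤ a i) → χ j a ≤ χ j b)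
    (hconn : ∀ c : Fin m → ℕ, memDel S d (n + 1) c →
      ∀ r s, d r < c r → d s < c s →
        Relation.ReflTransGen
          (fun u v => d u < c u ∧ d v < c v ∧
            ∀ p, d p < c p → p ≠ u → p ≠ v → χ p (subE c u) = χ p (subE c v)) r s)
    (R : Finset (Fin m)) (d' : Fin m → ℕ)
    (hRS : R ⊆ S) (hdd : ∀ i, d i ≤ d' i) (hd'S : ∀ i, d i < d' i → i ∈ S)
    (hne : ∃ b : Fin m → ℕ, memDel R d' n b) :
    ∀ c : Fin m → ℕ, memDel R d' (n + 1) c →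
      ∀ r s, d' r < c r → d' s < c s →
        Relation.ReflTransGen
          (fun u v => d' u < c u ∧ d' v < c v ∧
            ∀ p, d' p < c p → p ≠ u → p ≠ v → χ p (subE c u) = χ p (subE c v)) r s := by
  intro c hc r s hr hs
  have hcS : memDel S d (n + 1) c := by
    refine ⟨hc.1, fun i => (hdd i).trans (hc.2.1 i), fun i hi => ?_⟩
    by_cases h : d i < d' i
    · exact hd'S i h
    · exact hRS (hc.2.2 i (by omega))
  have hWV : ∀ p, d' p < c p → d p < c p := fun p hp => (hdd p).trans_lt hp
  exact reflTransGen_shortcut (fun p u => χ p (subE c u)) (fun p => d p < c p)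
    (fun p => d' p < c p) hWV hr hs (hconn c hcS r s (hWV r hr) (hWV s hs))
end

section
/- Let S ⊆ {1,…,m} with |S| ≥ 2 and suppose every down-graph of Δ_S(n,d) contains a spanning tree of linear syzygy edges for the isotone maps {χ_j}_{j ∈ S}. Let b ∈ Δ_S(n,d) and p ∈ S, and suppose χ_i(b) = 0 for every i ∈ supp(b − d) ∖ {p}. Then every up-graph U_S(a;d) in Δ_S(n,d) with a_p ≥ b_p has a zero corner for {χ_j}_{j ∈ S}. -/
lemma sum_addE {m : ℕ} (b : Fin m → ℕ) (i : Fin m) : ∑ t, addE b i t = (∑ t, b t) + 1 := by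
  simp [addE, Finset.sum_add_distrib]

lemma subE_addE {m : ℕ} (b : Fin m → ℕ) (i : Fin m) : subE (addE b i) i = b := by
  funext t; simp [subE, addE]

lemma addE_subE {m : ℕ} (c : Fin m → ℕ) (i : Fin m) (h : 0 < c i) : addE (subE c i) i = c := by
  funext t
  simp only [subE, addE]
  split_ifs with h1
  · subst h1; omega
  · omega

lemma memDel_mono {m N : ℕ} {S S' : Finset (Fin m)} {d d' c : Fin m → ℕ}
    (hSS : S' ⊆ S) (hd : ∀ i, d i ≤ d' i) (h : ∀ i, i ∈ S ∨ d' i = d i)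
    (hc : memDel S' d' N c) : memDel S d N c := by
  refine ⟨hc.1, fun i => (hd i).trans (hc.2.1 i), fun i hi => ?_⟩
  rcases h i with h | h
  · exact h
  · exact hSS (hc.2.2 i (by omega))

lemma memDel_addE_left {m N : ℕ} {S : Finset (Fin m)} {d c : Fin m → ℕ} {j : Fin m}
    (hc : memDel S d N c) (hj : d j < c j) : memDel S (addE d j) N c := by
  refine ⟨hc.1, fun i => ?_, fun i hi => hc.2.2 i ?_⟩
  · have := hc.2.1 i
    simp only [addE]
    split_ifs with h
    · subst h; omega
    · omega
  · simp only [addE] at hi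
    omega

/-- The pair `(c; u, v)` is a linear syzygy edge of the down-graph of `c`; the degenerate case
`u = v` is allowed. -/
def LinEdge {m : ℕ} (d : Fin m → ℕ) (χ : Fin m → (Fin m → ℕ) → Bool) (c : Fin m → ℕ)
    (u v : Fin m) : Prop :=
  d u < c u ∧ d v < c v ∧
    ∀ q, d q < c q → q ≠ u → q ≠ v → χ q (subE c u) = χ q (subE c v)

/-- Connectivity by linear syzygy edges survives when the `p`-coordinate leaves the support:
visits of a path to `p` are contracted. -/
lemma conn_restrict {m : ℕ} {d c : Fin m → ℕ} {χ : Fin m → (Fin m → ℕ) → Bool} {p r s : Fin m}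
    (hr : r ≠ p) (hs : s ≠ p) (h : Relation.ReflTransGen (LinEdge d χ c) r s) :
    Relation.ReflTransGen (LinEdge (Function.update d p (c p)) χ c) r s := by
  have hlt : ∀ q, Function.update d p (c p) q < c q → q ≠ p ∧ d q < c q := by
    intro q hq
    by_cases hqp : q = p
    · subst hqp; simp at hq
    · rw [Function.update_of_ne hqp] at hq
      exact ⟨hqp, hq⟩
  -- A path ending at `p` is recorded through the last vertex before its visit to `p`.
  suffices H : ∀ t, Relation.ReflTransGen (LinEdge d χ c) r t →
      (t ≠ p → Relation.ReflTransGen (LinEdge (Function.update d p (c p)) χ c) r t) ∧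
      (t = p → ∃ u, u ≠ p ∧ Relation.ReflTransGen (LinEdge (Function.update d p (c p)) χ c) r u ∧
        LinEdge d χ c u p) from (H s h).1 hs
  intro t ht
  induction ht with
  | refl => exact ⟨fun _ => .refl, fun h => absurd h hr⟩
  | @tail x y _ hxy ih =>
    refine ⟨fun hy => ?_, fun hy => ?_⟩
    · by_cases hx : x = p
      · obtain ⟨u, hu, hru, hup⟩ := ih.2 hx
        subst hx
        refine hru.tail ⟨by rw [Function.update_of_ne hu]; exact hup.1,
          by rw [Function.update_of_ne hy]; exact hxy.2.1, fun q hq hqu hqy => ?_⟩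
        obtain ⟨h1, h2⟩ := hlt q hq
        exact (hup.2.2 q h2 hqu h1).trans (hxy.2.2 q h2 h1 hqy)
      · refine (ih.1 hx).tail ⟨by rw [Function.update_of_ne hx]; exact hxy.1,
          by rw [Function.update_of_ne hy]; exact hxy.2.1, fun q hq hqu hqy => ?_⟩
        exact hxy.2.2 q (hlt q hq).2 hqu hqy
    · by_cases hx : x = p
      · exact ih.2 hx
      · subst hy
        exact ⟨x, hx, ih.1 hx, hxy⟩

/-- A point with zeros away from `p` can be moved along linear syzygy edges so as to raise its
`p`-coordinate to `a_p`, for any `a ≥ d` of degree less than `n` with `a_p = b_p + k`. -/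
lemma exists_raise {m n : ℕ} {S : Finset (Fin m)} {d : Fin m → ℕ}
    {χ : Fin m → (Fin m → ℕ) → Bool}
    (hiso : ∀ j ∈ S, ∀ a b : Fin m → ℕ,
      memDel S (addE d j) n a → memDel S (addE d j) n b →
      a j ≤ b j → (∀ i, i ≠ j → b i ≤ a i) → χ j a ≤ χ j b)
    (hconn : ∀ c : Fin m → ℕ, memDel S d (n + 1) c →
      ∀ r s, d r < c r → d s < c s → Relation.ReflTransGen (LinEdge d χ c) r s)
    {p : Fin m} (hp : p ∈ S) {a : Fin m → ℕ} (ha : ∀ i, d i ≤ a i) (han : ∑ i, a i < n)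
    (k : ℕ) : ∀ b : Fin m → ℕ, memDel S d n b → (∀ i, d i < b i → i ≠ p → χ i b = false) →
      b p + k = a p →
      ∃ b', memDel S d n b' ∧ (∀ i, d i < b' i → i ≠ p → χ i b' = false) ∧ b' p = a p := by
  induction k with
  | zero => exact fun b hb hz hk => ⟨b, hb, hz, hk⟩
  | succ k ih =>
    intro b hb hz hk
    -- Otherwise `b ≤ a` everywhere, against the degrees.
    obtain ⟨s, hsp, hs⟩ : ∃ s, s ≠ p ∧ d s < b s := by
      by_contra! hcon
      have : ∑ i, b i ≤ ∑ i, a i := by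
        refine Finset.sum_le_sum fun i _ => ?_
        by_cases hi : i = p
        · subst hi; omega
        · exact (hcon i hi).trans (ha i)
      have := hb.1
      omega
    have hcp : addE b p p = b p + 1 := by simp [addE]
    have hcne : ∀ i, i ≠ p → addE b p i = b i := fun i hi => by simp [addE, hi]
    have hc : memDel S d (n + 1) (addE b p) := by
      refine ⟨by rw [sum_addE, hb.1], fun i => ?_, fun i hi => ?_⟩
      · exact (hb.2.1 i).trans (by simp [addE])
      · by_cases hip : i = p
        · exact hip ▸ hp
        · rw [hcne i hip] at hi
          exact hb.2.2 i hi
    have hbp := hb.2.1 p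
    have hpath := hconn _ hc p s (by omega) (by rw [hcne s hsp]; exact hs)
    obtain ⟨v, hvp, hv⟩ : ∃ v, v ≠ p ∧ LinEdge d χ (addE b p) p v := by
      have H : ∀ t, Relation.ReflTransGen (LinEdge d χ (addE b p)) p t →
          t = p ∨ ∃ v, v ≠ p ∧ LinEdge d χ (addE b p) p v := by
        intro t ht
        induction ht with
        | refl => exact .inl rfl
        | @tail x y _ hxy ih =>
          rcases ih with ih | ih
          · subst ih
            by_cases hy : y = x
            · exact .inl hy
            · exact .inr ⟨y, hy, hxy⟩
          · exact .inr ih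
      exact (H s hpath).resolve_left hsp
    have hvb : d v < b v := by have := hv.2.1; rwa [hcne v hvp] at this
    have hb'v : subE (addE b p) v v = b v - 1 := by simp [subE, hcne v hvp]
    have hb'ne : ∀ i, i ≠ v → subE (addE b p) v i = addE b p i := fun i hi => by
      simp [subE, hi]
    have hb' : memDel S d n (subE (addE b p) v) := by
      refine ⟨?_, fun i => ?_, fun i hi => hc.2.2 i ?_⟩
      · have h1 := sum_addE (subE (addE b p) v) v
        rw [addE_subE _ _ (by rw [hcne v hvp]; omega), hc.1] at h1
        omega
      · by_cases hiv : i = v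
        · subst hiv; rw [hb'v]; omega
        · rw [hb'ne i hiv]; exact hc.2.1 i
      · exact hi.trans_le (Nat.sub_le _ _)
    refine ih (subE (addE b p) v) hb' (fun i hi hip => ?_) ?_
    · by_cases hiv : i = v
      · subst hiv
        have := hiso i (hb.2.2 i hvb) _ b (memDel_addE_left hb' hi) (memDel_addE_left hb hvb)
          (by rw [hb'v]; omega) (fun j hj => by rw [hb'ne j hj]; simp [addE])
        rw [hz i hvb hip] at this
        exact Bool.eq_false_of_le_false this
      · rw [hb'ne i hiv] at hi
        rw [← hv.2.2 i hi hip hiv, subE_addE]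
        rw [hcne i hip] at hi
        exact hz i hi hip
    · rw [hb'ne p (Ne.symm hvp), hcp]; omega

/-- The theorem without a lower bound on `|S|`, in the form suited to induction on `|S|`. -/
lemma exists_zero_corner {m n : ℕ} (χ : Fin m → (Fin m → ℕ) → Bool) (a : Fin m → ℕ) (k : ℕ) :
    ∀ (S : Finset (Fin m)) (d : Fin m → ℕ), S.card = k →
    (∀ j ∈ S, ∀ a b : Fin m → ℕ,
      memDel S (addE d j) n a → memDel S (addE d j) n b →
      a j ≤ b j → (∀ i, i ≠ j → b i ≤ a i) → χ j a ≤ χ j b) →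
    (∀ c : Fin m → ℕ, memDel S d (n + 1) c →
      ∀ r s, d r < c r → d s < c s → Relation.ReflTransGen (LinEdge d χ c) r s) →
    ∀ b : Fin m → ℕ, memDel S d n b → ∀ p ∈ S,
    (∀ i, d i < b i → i ≠ p → χ i b = false) →
    ∀ N, N + 1 = n → memDel S d N a → b p ≤ a p → ∃ j ∈ S, χ j (addE a j) = false := by
  induction k with
  | zero =>
    intro S d hS _ _ b _ p hp
    rw [Finset.card_eq_zero] at hS
    simp [hS] at hp
  | succ k ih =>
    intro S d hS hiso hconn b₀ hb₀ p hp hz₀ N hN ha hab₀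
    obtain ⟨b, hb, hz, hbp⟩ := exists_raise hiso hconn hp ha.2.1 (by rw [ha.1]; omega)
      (a p - b₀ p) b₀ hb₀ hz₀ (by omega)
    have hdne : ∀ i, i ≠ p → Function.update d p (b p) i = d i :=
      fun i hi => Function.update_of_ne hi _ _
    have hdp : Function.update d p (b p) p = b p := Function.update_self ..
    have hdle : ∀ i, d i ≤ Function.update d p (b p) i := by
      intro i
      by_cases hi : i = p
      · subst hi; rw [hdp]; exact hb.2.1 i
      · rw [hdne i hi]
    have hcase : ∀ i, i ∈ S ∨ Function.update d p (b p) i = d i := by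
      intro i
      by_cases hi : i = p
      · exact .inl (hi ▸ hp)
      · exact .inr (hdne i hi)
    have hsub : S.erase p ⊆ S := Finset.erase_subset _ _
    have hrestr : ∀ M (x : Fin m → ℕ), memDel S d M x → x p = b p →
        memDel (S.erase p) (Function.update d p (b p)) M x := by
      intro M x hx hxp
      refine ⟨hx.1, fun i => ?_, fun i hi => ?_⟩
      · by_cases hi : i = p
        · subst hi; rw [hdp, hxp]
        · rw [hdne i hi]; exact hx.2.1 i
      · by_cases hip : i = p
        · subst hip; rw [hdp, hxp] at hi; exact absurd hi (lt_irrefl _)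
        · rw [hdne i hip] at hi
          exact Finset.mem_erase.2 ⟨hip, hx.2.2 i hi⟩
    have hz' : ∀ i, Function.update d p (b p) i < b i → χ i b = false := by
      intro i hi
      by_cases hip : i = p
      · subst hip; rw [hdp] at hi; exact absurd hi (lt_irrefl _)
      · rw [hdne i hip] at hi
        exact hz i hi hip
    by_cases hex : ∃ p' ∈ S.erase p, b p' ≤ a p'
    · obtain ⟨p', hp', hle⟩ := hex
      have hiso' : ∀ j ∈ S.erase p, ∀ x y : Fin m → ℕ,
          memDel (S.erase p) (addE (Function.update d p (b p)) j) n x →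
          memDel (S.erase p) (addE (Function.update d p (b p)) j) n y →
          x j ≤ y j → (∀ i, i ≠ j → y i ≤ x i) → χ j x ≤ χ j y := by
        intro j hj x y hx hy
        have hmono : ∀ z, memDel (S.erase p) (addE (Function.update d p (b p)) j) n z →
            memDel S (addE d j) n z := fun z hz =>
          memDel_mono hsub (fun i => Nat.add_le_add_right (hdle i) _)
            (fun i => (hcase i).imp_right fun h => by simp only [addE, h]) hz
        exact hiso j (hsub hj) x y (hmono x hx) (hmono y hy)
      have hconn' : ∀ c : Fin m → ℕ,
          memDel (S.erase p) (Function.update d p (b p)) (n + 1) c →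
          ∀ r s, Function.update d p (b p) r < c r → Function.update d p (b p) s < c s →
          Relation.ReflTransGen (LinEdge (Function.update d p (b p)) χ c) r s := by
        intro c hc r s hr hs
        have hcp : c p = b p := by
          have h1 := hc.2.1 p
          have h2 := mt (hc.2.2 p) (Finset.notMem_erase p S)
          omega
        have hrp : r ≠ p := by rintro rfl; omega
        have hsp : s ≠ p := by rintro rfl; omega
        rw [hdne r hrp] at hr
        rw [hdne s hsp] at hs
        rw [← hcp]
        exact conn_restrict hrp hsp
          (hconn c (memDel_mono hsub hdle hcase hc) r s hr hs)
      obtain ⟨j, hj, hj'⟩ := ih (S.erase p) (Function.update d p (b p))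
        (by rw [Finset.card_erase_of_mem hp, hS]; rfl) hiso' hconn' b (hrestr n b hb rfl) p' hp'
        (fun i hi _ => hz' i hi) N hN (hrestr N a ha hbp.symm) hle
      exact ⟨j, hsub hj, hj'⟩
    · push Not at hex
      have hle : ∀ i, a i ≤ b i := by
        intro i
        by_cases hip : i = p
        · subst hip; omega
        · by_cases hi : i ∈ S
          · exact (hex i (Finset.mem_erase.2 ⟨hip, hi⟩)).le
          · have h2 := mt (ha.2.2 i) hi
            have := hb.2.1 i
            omega
      obtain ⟨q, hq⟩ : ∃ q, a q < b q := by
        by_contra! hcon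
        have := Finset.sum_le_sum fun i (_ : i ∈ Finset.univ) => hcon i
        rw [hb.1, ha.1] at this
        omega
      have hqp : q ≠ p := by rintro rfl; omega
      have hdq : d q < b q := (ha.2.1 q).trans_lt hq
      have hle' : ∀ i ∈ Finset.univ, addE a q i ≤ b i := by
        intro i _
        have := hle i
        simp only [addE]
        split_ifs with h
        · subst h; omega
        · omega
      have heq : addE a q = b := funext fun i =>
        (Finset.sum_eq_sum_iff_of_le hle').1 (by rw [sum_addE, ha.1, hb.1, hN]) i
          (Finset.mem_univ i)
      exact ⟨q, hb.2.2 q hdq, by rw [heq]; exact hz q hdq hqp⟩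

/-- Let `S` have cardinality `≥ 2`, and suppose every down-graph of
`Δ_S(n,d)` contains a spanning tree of linear syzygy edges for the isotone maps `χ_j`
(`j ∈ S`, with values in `{0 < 1}` modelled as `Bool`).  Let `b ∈ Δ_S(n,d)` and `p ∈ S` with
`χ_i(b) = 0` for every `i ∈ supp(b - d) \ {p}`.  Then every up-graph `U_S(a; d)` in
`Δ_S(n,d)` with `a_p ≥ b_p` has a zero corner. -/
theorem stmt_17 {m n : ℕ} (hn : 1 ≤ n) (S : Finset (Fin m)) (hS : 2 ≤ S.card)
    (d : Fin m → ℕ)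
    (χ : Fin m → (Fin m → ℕ) → Bool)
    (hiso : ∀ j ∈ S, ∀ a b : Fin m → ℕ,
      memDel S (addE d j) n a → memDel S (addE d j) n b →
      a j ≤ b j → (∀ i, i ≠ j → b i ≤ a i) → χ j a ≤ χ j b)
    (hconn : ∀ c : Fin m → ℕ, memDel S d (n + 1) c →
      ∀ r s, d r < c r → d s < c s →
        Relation.ReflTransGen
          (fun u v => d u < c u ∧ d v < c v ∧
            ∀ q, d q < c q → q ≠ u → q ≠ v → χ q (subE c u) = χ q (subE c v)) r s)
    (b : Fin m → ℕ) (hb : memDel S d n b) (p : Fin m) (hp : p ∈ S)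
    (hzero : ∀ i, d i < b i → i ≠ p → χ i b = false) :
    ∀ a : Fin m → ℕ, memDel S d (n - 1) a → b p ≤ a p →
      ∃ j ∈ S, χ j (addE a j) = false := by
  intro a ha hab
  exact exists_zero_corner χ a S.card S d rfl hiso hconn b hb p hp hzero (n - 1) (by omega) ha hab
end

section
/- Let X̌, Y̌, Ž be finite sets of variables of three distinct colors and let I be an ideal of k[X̌ ∪ Y̌ ∪ Ž] generated by a subset of the rainbow monomials {x_α y_β z_γ : x_α ∈ X̌, y_β ∈ Y̌, z_γ ∈ Ž}. Let x_α y_β z_γ be a rainbow monomial not in I. Then the colon ideal I : (x_α y_β z_γ) is generated by variables if and only if for every generator x_{α′} y_{β′} z_{γ′} of I, at least one of the variables x_{α′}, y_{β′}, z_{γ′} lies in I : (x_α y_β z_γ). -/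
/-!
Everything is read off exponent vectors: a polynomial lies in the monomial ideal `I` iff each of
its exponents dominates the exponent of some generator (`mem_rainbow_ideal_iff`).

If `I : r` (with `r = x_α y_β z_γ`) is generated by a set `S` of variables, then every generator
of `I` lies in `I : r`, so it is divisible by a variable of `S`, which must be one of its three
factors.

Conversely, take for `S` the set of all variables in `I : r`. As the generators are squarefree and
`r ∉ I`, no variable of `r` belongs to `S` (`exponent_eq_zero_of_X_mul_mem`). For a monomial `m`
of some `g ∈ I : r`, the product `m r` is divisible by a generator, which by hypothesis has a
factor in `S`; this factor does not divide `r`, so it divides `m`.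
-/

open MvPolynomial

noncomputable section

/-- The rainbow monomial `x_α y_β z_γ` in `k[X̌ ∪ Y̌ ∪ Ž]`, the variables being indexed by
the sum type `A ⊕ B ⊕ C` of the three color classes. -/
def rainbow (k : Type*) [Field k] {A B C : Type*} (α : A) (β : B) (γ : C) :
    MvPolynomial (A ⊕ B ⊕ C) k :=
  MvPolynomial.X (Sum.inl α) * MvPolynomial.X (Sum.inr (Sum.inl β)) *
    MvPolynomial.X (Sum.inr (Sum.inr γ))

/-- The exponent vector of the rainbow monomial `x_α y_β z_γ`. -/
def rainbowExp {A B C : Type*} (t : A × B × C) : (A ⊕ B ⊕ C) →₀ ℕ :=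
  Finsupp.single (Sum.inl t.1) 1 + Finsupp.single (Sum.inr (Sum.inl t.2.1)) 1 +
    Finsupp.single (Sum.inr (Sum.inr t.2.2)) 1

lemma rainbow_eq_monomial {k : Type*} [Field k] {A B C : Type*} (t : A × B × C) :
    rainbow k t.1 t.2.1 t.2.2 = monomial (rainbowExp t) 1 := by
  simp [rainbow, rainbowExp, X, monomial_mul]

/-- Rainbow monomials are squarefree. -/
lemma rainbowExp_le_one {A B C : Type*} (t : A × B × C) (v : A ⊕ B ⊕ C) :
    rainbowExp t v ≤ 1 := by
  classical
  rcases v with a | b | c <;> simp [rainbowExp, Finsupp.single_apply] <;> split_ifs <;> simp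

lemma rainbowExp_ne_zero_iff {A B C : Type*} (t : A × B × C) (v : A ⊕ B ⊕ C) :
    rainbowExp t v ≠ 0 ↔
      v = Sum.inl t.1 ∨ v = Sum.inr (Sum.inl t.2.1) ∨ v = Sum.inr (Sum.inr t.2.2) := by
  classical
  rcases v with a | b | c <;> simp [rainbowExp, Finsupp.single_apply, eq_comm]

lemma mem_rainbow_ideal_iff {k : Type*} [Field k] {A B C : Type*} (G : Set (A × B × C))
    (p : MvPolynomial (A ⊕ B ⊕ C) k) :
    p ∈ Ideal.span { p | ∃ t ∈ G, p = rainbow k t.1 t.2.1 t.2.2 } ↔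
      ∀ m ∈ p.support, ∃ t ∈ G, rainbowExp t ≤ m := by
  have h : { p | ∃ t ∈ G, p = rainbow k t.1 t.2.1 t.2.2 } =
      (fun s => monomial s (1 : k)) '' (rainbowExp '' G) := by
    ext p
    simp [rainbow_eq_monomial, eq_comm]
  rw [h, mem_ideal_span_monomial_image]
  simp

lemma monomial_mem_rainbow_ideal_iff {k : Type*} [Field k] {A B C : Type*}
    (G : Set (A × B × C)) (m : (A ⊕ B ⊕ C) →₀ ℕ) :
    monomial m (1 : k) ∈ Ideal.span { p | ∃ t ∈ G, p = rainbow k t.1 t.2.1 t.2.2 } ↔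
      ∃ t ∈ G, rainbowExp t ≤ m := by
  classical
  rw [mem_rainbow_ideal_iff]
  simp [support_monomial]

/-- A variable in the colon ideal `I : r` of a rainbow monomial `r ∉ I` does not divide `r`:
otherwise a squarefree generator dividing `x_v r` would already divide `r`. -/
lemma exponent_eq_zero_of_X_mul_mem {k : Type*} [Field k] {A B C : Type*}
    (G : Set (A × B × C)) (s : A × B × C) (v : A ⊕ B ⊕ C)
    (hnot : rainbow k s.1 s.2.1 s.2.2 ∉
      Ideal.span { p | ∃ t ∈ G, p = rainbow k t.1 t.2.1 t.2.2 })
    (hv : X v * rainbow k s.1 s.2.1 s.2.2 ∈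
      Ideal.span { p | ∃ t ∈ G, p = rainbow k t.1 t.2.1 t.2.2 }) :
    rainbowExp s v = 0 := by
  classical
  by_contra hne
  apply hnot
  rw [rainbow_eq_monomial, X, monomial_mul, one_mul, monomial_mem_rainbow_ideal_iff] at hv
  obtain ⟨t, ht, hle⟩ := hv
  rw [rainbow_eq_monomial, monomial_mem_rainbow_ideal_iff]
  refine ⟨t, ht, fun w => ?_⟩
  have hw := hle w
  have h1 := rainbowExp_le_one t w
  rw [Finsupp.add_apply, Finsupp.single_apply] at hw
  split_ifs at hw with hvw
  · subst hvw
    omega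
  · omega

/-- Let `X̌ = A`, `Y̌ = B`, `Ž = C` be finite sets of variables of three
distinct colors and let `I` be an ideal of `k[X̌ ∪ Y̌ ∪ Ž]` generated by the set of rainbow
monomials indexed by `G ⊆ A × B × C`.  Let `x_α y_β z_γ` be a rainbow monomial not in `I`.
Then the colon ideal `I : (x_α y_β z_γ)` is generated by variables if and only if for every
generator `x_{α'} y_{β'} z_{γ'}` of `I`, at least one of the variables `x_{α'}`, `y_{β'}`,
`z_{γ'}` lies in `I : (x_α y_β z_γ)`. -/
theorem stmt_18 {k : Type*} [Field k] {A B C : Type*} [Finite A] [Finite B] [Finite C]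
    (G : Set (A × B × C))
    (I : Ideal (MvPolynomial (A ⊕ B ⊕ C) k))
    (hI : I = Ideal.span { p | ∃ t ∈ G, p = rainbow k t.1 t.2.1 t.2.2 })
    (α : A) (β : B) (γ : C)
    (hnot : rainbow k α β γ ∉ I) :
    (∃ S : Set (A ⊕ B ⊕ C), ∀ g,
        g * rainbow k α β γ ∈ I ↔ g ∈ Ideal.span (MvPolynomial.X '' S)) ↔
    (∀ t ∈ G,
      MvPolynomial.X (Sum.inl t.1) * rainbow k α β γ ∈ I ∨
      MvPolynomial.X (Sum.inr (Sum.inl t.2.1)) * rainbow k α β γ ∈ I ∨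
      MvPolynomial.X (Sum.inr (Sum.inr t.2.2)) * rainbow k α β γ ∈ I) := by
  classical
  subst hI
  have hsupp : ∀ (g : MvPolynomial (A ⊕ B ⊕ C) k), ∀ m ∈ g.support,
      m + rainbowExp (α, β, γ) ∈ (g * rainbow k α β γ).support := by
    intro g m hm
    rw [rainbow_eq_monomial (α, β, γ), mem_support_iff, coeff_mul_monomial, mul_one]
    exact mem_support_iff.mp hm
  constructor
  · rintro ⟨S, hS⟩ t ht
    have hmem : rainbow k t.1 t.2.1 t.2.2 ∈ Ideal.span (X '' S) :=
      (hS _).mp (Ideal.mul_mem_right _ _ (Ideal.subset_span ⟨t, ht, rfl⟩))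
    rw [rainbow_eq_monomial, mem_ideal_span_X_image] at hmem
    obtain ⟨v, hvS, hv⟩ := hmem (rainbowExp t) (by simp [support_monomial])
    have hcolon := (hS (X v)).mpr (Ideal.subset_span ⟨v, hvS, rfl⟩)
    rcases (rainbowExp_ne_zero_iff t v).mp hv with rfl | rfl | rfl
    · exact Or.inl hcolon
    · exact Or.inr (Or.inl hcolon)
    · exact Or.inr (Or.inr hcolon)
  · intro h
    refine ⟨{v | X v * rainbow k α β γ ∈
      Ideal.span { p | ∃ t ∈ G, p = rainbow k t.1 t.2.1 t.2.2 }}, fun g => ⟨fun hg => ?_, ?_⟩⟩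
    · rw [mem_ideal_span_X_image]
      intro m hm
      obtain ⟨t, ht, hle⟩ := (mem_rainbow_ideal_iff G _).mp hg _ (hsupp g m hm)
      obtain ⟨v, hvt, hv⟩ : ∃ v, rainbowExp t v ≠ 0 ∧ X v * rainbow k α β γ ∈
          Ideal.span { p | ∃ t ∈ G, p = rainbow k t.1 t.2.1 t.2.2 } := by
        simp only [rainbowExp_ne_zero_iff]
        rcases h t ht with h | h | h
        · exact ⟨_, Or.inl rfl, h⟩
        · exact ⟨_, Or.inr (Or.inl rfl), h⟩
        · exact ⟨_, Or.inr (Or.inr rfl), h⟩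
      refine ⟨v, hv, ?_⟩
      have h0 := exponent_eq_zero_of_X_mul_mem G (α, β, γ) v hnot hv
      have hlev := hle v
      rw [Finsupp.add_apply, h0] at hlev
      omega
    · intro hg
      induction hg using Submodule.span_induction with
      | mem x hx =>
        obtain ⟨v, hv, rfl⟩ := hx
        exact hv
      | zero => simp
      | add x y _ _ hx hy => rw [add_mul]; exact Ideal.add_mem _ hx hy
      | smul a x _ hx => rw [smul_eq_mul, mul_assoc]; exact Ideal.mul_mem_left _ _ hx
end
end
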